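/- Let {H_iα_i}_{i=1}^{s} be a coset partition of F_n (n ≥ 1) with indices 1 < d_1 ≤ … ≤ d_s, and let h_i be the period of the transition matrix A_i of H_i. Suppose h_ℓ > 1 and h_ℓ does not properly divide any other period, i.e., for every 1 ≤ i ≤ s, if h_ℓ divides h_i then h_i = h_ℓ. Then there exists j ≠ ℓ such that h_j = h_ℓ. -/

import Mathlib

/-!
The proof is a character-sum argument.  Write `h = h_ℓ`, let `ζ` be a primitive `h`-th root of
unity and let `χ : F_n → ℂˣ` be the character sending every generator to `ζ`, so that `χ` takes
the value `ζ ^ m` on a positive word of length `m`.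

* `χ` is trivial on `H_ℓ` (`lengthChar_eq_one_of_mem`).  Positive words in `H_ℓ` have length
  divisible by `h`, and every element of `F_n` agrees with a positive word modulo the normal core
  of `H_ℓ` intersected with `ker χ`, because that core contains a positive power of each generator.
* Conversely, if `χ` is trivial on `H_j` then `h ∣ h_j` (`dvd_period_of_lengthChar_trivial`).

All the `H_i` contain a common normal subgroup `K` of finite index, on which `χ` is trivial, so the
partition and `χ` descend to the finite group `F_n ⧸ K`.  There the sum of `χ` over the whole group
vanishes, as does its sum over any `H_j α_j` with `χ` nontrivial on `H_j`, whereas its sum over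
`H_ℓ α_ℓ` is a nonzero multiple of `χ(α_ℓ)`.  Hence some `j ≠ ℓ` has `χ` trivial on `H_j`
(`exists_trivial_on_other`), so `h ∣ h_j`, and the hypothesis on `h` gives `h_j = h`.
-/

attribute [local instance] Classical.propDecidable

noncomputable section

/-- The set of right cosets `Hg` of a subgroup `H` of `G`. -/
abbrev RightCosets {G : Type*} [Group G] (H : Subgroup G) : Type _ :=
  Quotient (QuotientGroup.rightRel H)

/-- The right coset `Hg`, as an element of the right coset space. -/
def rcoset {G : Type*} [Group G] (H : Subgroup G) (g : G) : RightCosets H :=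
  Quotient.mk'' g

/-- Right multiplication by `a` descends to the right coset space. -/
def cosetMul {G : Type*} [Group G] (H : Subgroup G) (a : G) :
    RightCosets H → RightCosets H :=
  Quotient.map' (· * a) (fun x y hxy => by
    rw [QuotientGroup.rightRel_apply] at hxy ⊢
    simpa [mul_inv_rev, mul_assoc] using hxy)

noncomputable instance rightCosetsFintype {G : Type*} [Group G] (H : Subgroup G)
    [H.FiniteIndex] : Fintype (RightCosets H) :=
  have : Finite (G ⧸ H) := H.finite_quotient_of_finiteIndex
  have : Finite (RightCosets H) :=
    Finite.of_equiv _ (QuotientGroup.quotientRightRelEquivQuotientLeftRel H).symm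
  Fintype.ofFinite _

/-- The transition matrix of the Schreier graph of a subgroup `H` of the free group `F_n`:
rows and columns are indexed by the right cosets of `H`, and the `(x, y)` entry is the number
of generators `a_i` with `x · a_i = y`. -/
def schreierMatrix {n : ℕ} (H : Subgroup (FreeGroup (Fin n))) :
    Matrix (RightCosets H) (RightCosets H) ℕ :=
  Matrix.of fun x y => Nat.card {i : Fin n // cosetMul H (FreeGroup.of i) x = y}

/-- The gcd of a set of natural numbers: the natural generator of the ideal of `ℤ`
generated by the set. -/
def setGcd (S : Set ℕ) : ℕ :=
  (Submodule.IsPrincipal.generator (Ideal.span ((fun m : ℕ => (m : ℤ)) '' S))).natAbs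

/-- The period of the transition matrix of the Schreier graph of `H`: the gcd of all `m ≥ 1`
such that the `(H, H)` entry of `A ^ m` is positive. -/
def schreierPeriod {n : ℕ} (H : Subgroup (FreeGroup (Fin n))) [H.FiniteIndex] : ℕ :=
  setGcd {m : ℕ | 1 ≤ m ∧ 0 < (schreierMatrix H ^ m) (rcoset H 1) (rcoset H 1)}

/-- The right coset `Hg`, as a subset of `G`. -/
def rightCosetSet {G : Type*} [Group G] (H : Subgroup G) (g : G) : Set G :=
  {x : G | x * g⁻¹ ∈ H}

/-- `{H_i α_i}` is a coset partition: the right cosets `H_i α_i` are pairwise disjoint and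
their union is the whole group. -/
def IsCosetPartition {G : Type*} [Group G] {ι : Type*}
    (H : ι → Subgroup G) (α : ι → G) : Prop :=
  (∀ x : G, ∃ i, x ∈ rightCosetSet (H i) (α i)) ∧
    Pairwise fun i j => Disjoint (rightCosetSet (H i) (α i)) (rightCosetSet (H j) (α j))

/-- The element of the free group associated to a positive word `w` of length `k`. -/
def wordProd {n k : ℕ} (w : Fin k → Fin n) : FreeGroup (Fin n) :=
  (List.ofFn fun j => FreeGroup.of (w j)).prod

/-- The number of positive words of length `k` whose associated element lies in `Hα`. -/
def cosetCount {n : ℕ} (H : Subgroup (FreeGroup (Fin n))) (α : FreeGroup (Fin n))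
    (k : ℕ) : ℕ :=
  Nat.card {w : Fin k → Fin n // wordProd w ∈ rightCosetSet H α}

/-- The generating function of the coset `Hα`. -/
def genFun {n : ℕ} (H : Subgroup (FreeGroup (Fin n))) (α : FreeGroup (Fin n)) (z : ℂ) : ℂ :=
  ∑' k : ℕ, (cosetCount H α k : ℂ) * z ^ k

end

noncomputable section

/-- The transition matrix, regarded as a complex matrix. -/
def schreierMatrixC {n : ℕ} (H : Subgroup (FreeGroup (Fin n))) :
    Matrix (RightCosets H) (RightCosets H) ℂ :=
  (schreierMatrix H).map (Nat.cast : ℕ → ℂ)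

/-- The polynomial `q(z) = det (I - z A) ∈ ℂ[z]`, for `A` the transition matrix of `H`. -/
def detPoly {n : ℕ} (H : Subgroup (FreeGroup (Fin n))) [H.FiniteIndex] : Polynomial ℂ :=
  Matrix.det
    ((1 : Matrix (RightCosets H) (RightCosets H) (Polynomial ℂ)) -
      (Polynomial.X : Polynomial ℂ) • (schreierMatrix H).map (fun m : ℕ => (Polynomial.C (m : ℂ))))

/-- The power series `f_{xy}(z) = ∑_k (A^k)(x,y) z^k`. -/
def pathSeries {n : ℕ} (H : Subgroup (FreeGroup (Fin n))) [H.FiniteIndex]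
    (x y : RightCosets H) (z : ℂ) : ℂ :=
  ∑' k : ℕ, (((schreierMatrix H ^ k) x y : ℕ) : ℂ) * z ^ k

/-- The residue class `dℤ + r`, as a subset of `ℤ`. -/
def residueClass (d : ℕ) (r : ℤ) : Set ℤ :=
  {x : ℤ | (d : ℤ) ∣ x - r}

end

/-! ### The period and positive words -/

lemma setGcd_dvd {S : Set ℕ} {m : ℕ} (hm : m ∈ S) : setGcd S ∣ m := by
  have h : (m : ℤ) ∈ Ideal.span ((fun m : ℕ => (m : ℤ)) '' S) :=
    Ideal.subset_span ⟨m, hm, rfl⟩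
  rw [Submodule.IsPrincipal.mem_iff_generator_dvd] at h
  exact Int.natCast_dvd_natCast.mp (Int.natAbs_dvd.mpr h)

lemma dvd_setGcd {S : Set ℕ} {c : ℕ} (h : ∀ m ∈ S, c ∣ m) : c ∣ setGcd S := by
  have hle : Ideal.span ((fun m : ℕ => (m : ℤ)) '' S) ≤ Ideal.span {(c : ℤ)} := by
    rw [Ideal.span_le]
    rintro _ ⟨m, hm, rfl⟩
    exact Ideal.mem_span_singleton.mpr (Int.natCast_dvd_natCast.mpr (h m hm))
  have := Ideal.mem_span_singleton.mp (hle (Submodule.IsPrincipal.generator_mem _))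
  exact Int.natCast_dvd.mp this

/-- The element of the free group represented by a positive word, given as a list of letters. -/
def posWord {n : ℕ} (L : List (Fin n)) : FreeGroup (Fin n) :=
  (L.map FreeGroup.of).prod

lemma rcoset_eq_iff {G : Type*} [Group G] (H : Subgroup G) (x y : G) :
    rcoset H x = rcoset H y ↔ y * x⁻¹ ∈ H := by
  unfold rcoset
  rw [Quotient.eq'', QuotientGroup.rightRel_apply]

/-- Positive entries of `A ^ m` are exactly those joined by a positive word of length `m`. -/
lemma schreierMatrix_pow_pos_iff {n : ℕ} (H : Subgroup (FreeGroup (Fin n))) [H.FiniteIndex]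
    (m : ℕ) (g : FreeGroup (Fin n)) (y : RightCosets H) :
    0 < (schreierMatrix H ^ m) (rcoset H g) y ↔
      ∃ L : List (Fin n), L.length = m ∧ rcoset H (g * posWord L) = y := by
  induction m generalizing g with
  | zero =>
    rw [pow_zero, Matrix.one_apply]
    constructor
    · intro h
      refine ⟨[], rfl, ?_⟩
      by_contra hne
      rw [if_neg (by simpa [posWord] using hne)] at h
      exact absurd h (lt_irrefl _)
    · rintro ⟨L, hL, rfl⟩
      obtain rfl := List.length_eq_zero_iff.mp hL
      simp [posWord]
  | succ m ih =>
    rw [pow_succ', Matrix.mul_apply, Finset.sum_pos_iff]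
    constructor
    · rintro ⟨z, -, hz⟩
      obtain ⟨h1, h2⟩ := CanonicallyOrderedAdd.mul_pos.mp hz
      obtain ⟨⟨i, hi⟩⟩ := (Nat.card_pos_iff.mp h1).1
      subst hi
      obtain ⟨L, hL, hy⟩ := (ih (g * FreeGroup.of i)).mp h2
      exact ⟨i :: L, by simp [hL], by simpa [posWord, mul_assoc] using hy⟩
    · rintro ⟨L, hL, hy⟩
      obtain ⟨i, L, rfl⟩ := List.exists_cons_of_length_eq_add_one hL
      refine ⟨rcoset H (g * FreeGroup.of i), Finset.mem_univ _, ?_⟩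
      refine CanonicallyOrderedAdd.mul_pos.mpr ⟨?_, (ih _).mpr ⟨L, by simpa using hL, ?_⟩⟩
      · exact Nat.card_pos_iff.mpr ⟨⟨⟨i, rfl⟩⟩, inferInstance⟩
      · simpa [posWord, mul_assoc] using hy

lemma period_set_mem_iff {n : ℕ} (H : Subgroup (FreeGroup (Fin n))) [H.FiniteIndex] (m : ℕ) :
    0 < (schreierMatrix H ^ m) (rcoset H 1) (rcoset H 1) ↔
      ∃ L : List (Fin n), L.length = m ∧ posWord L ∈ H := by
  rw [schreierMatrix_pow_pos_iff]
  simp only [one_mul, rcoset_eq_iff, inv_mem_iff]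

lemma period_dvd_length {n : ℕ} (H : Subgroup (FreeGroup (Fin n))) [H.FiniteIndex]
    {L : List (Fin n)} (hL : posWord L ∈ H) : schreierPeriod H ∣ L.length := by
  rcases Nat.eq_zero_or_pos L.length with h0 | h0
  · rw [h0]
    exact dvd_zero _
  · exact setGcd_dvd ⟨h0, (period_set_mem_iff H _).mpr ⟨L, rfl, hL⟩⟩

/-! ### The length character -/

/-- The character of the free group taking the value `ζ` on every generator. -/
def lengthChar {n : ℕ} (ζ : ℂˣ) : FreeGroup (Fin n) →* ℂˣ :=
  FreeGroup.lift fun _ => ζ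

lemma lengthChar_posWord {n : ℕ} (ζ : ℂˣ) (L : List (Fin n)) :
    lengthChar ζ (posWord L) = ζ ^ L.length := by
  simp [lengthChar, posWord, map_list_prod, Function.comp_def]

/-- A normal subgroup containing a positive power of each generator has a positive word in
each of its cosets: replace `a⁻¹` by `a ^ (N - 1)`, where `a ^ N` is in the subgroup. -/
lemma exists_posWord {n : ℕ} (K : Subgroup (FreeGroup (Fin n))) [K.Normal] (N : ℕ) (hN : 0 < N)
    (hK : ∀ i, FreeGroup.of i ^ N ∈ K) (x : FreeGroup (Fin n)) :
    ∃ L : List (Fin n), (posWord L : FreeGroup (Fin n) ⧸ K) = x := by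
  induction x using FreeGroup.induction_on with
  | C1 => exact ⟨[], rfl⟩
  | of i => exact ⟨[i], by simp [posWord]⟩
  | inv_of i _ =>
    refine ⟨List.replicate (N - 1) i, ?_⟩
    rw [QuotientGroup.mk_inv, eq_inv_iff_mul_eq_one, ← QuotientGroup.mk_mul,
      QuotientGroup.eq_one_iff]
    have : posWord (List.replicate (N - 1) i) * FreeGroup.of i = FreeGroup.of i ^ N := by
      simp only [posWord, List.map_replicate, List.prod_replicate]
      rw [← pow_succ, Nat.sub_add_cancel hN]
    exact this ▸ hK i
  | mul x y hx hy =>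
    obtain ⟨L, hL⟩ := hx
    obtain ⟨M, hM⟩ := hy
    exact ⟨L ++ M, by simp [posWord, ← hL, ← hM]⟩

lemma lengthChar_eq_one_of_mem {n : ℕ} (H : Subgroup (FreeGroup (Fin n))) [H.FiniteIndex]
    (ζ : ℂˣ) (hζ : ζ ^ schreierPeriod H = 1) {x : FreeGroup (Fin n)} (hx : x ∈ H) :
    lengthChar ζ x = 1 := by
  have hpos : ∀ L : List (Fin n), posWord L ∈ H → lengthChar ζ (posWord L) = 1 := by
    intro L hL
    obtain ⟨c, hc⟩ := period_dvd_length H hL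
    rw [lengthChar_posWord, hc, pow_mul, hζ, one_pow]
  set N := H.normalCore.index with hN
  have hNpos : 0 < N := Nat.pos_of_ne_zero Subgroup.FiniteIndex.index_ne_zero
  have hpow : ∀ i, FreeGroup.of i ^ N ∈ H.normalCore ⊓ (lengthChar (n := n) ζ).ker := by
    intro i
    have hcore : FreeGroup.of i ^ N ∈ H.normalCore := Subgroup.pow_index_mem _ _
    refine ⟨hcore, ?_⟩
    have hw : posWord (List.replicate N i) = FreeGroup.of i ^ N := by simp [posWord]
    have := hpos (List.replicate N i) (hw ▸ H.normalCore_le hcore)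
    rw [hw] at this
    exact this
  obtain ⟨L, hL⟩ := exists_posWord _ N hNpos hpow x
  obtain ⟨h1, h2⟩ := QuotientGroup.eq.mp hL
  have h2' : (lengthChar ζ (posWord L))⁻¹ * lengthChar ζ x = 1 := by
    rw [← map_inv, ← map_mul]
    exact h2
  have hLH : posWord L ∈ H := by
    have := H.mul_mem hx (H.inv_mem (H.normalCore_le h1))
    simpa using this
  rwa [hpos L hLH, inv_one, one_mul] at h2'

lemma dvd_period_of_lengthChar_trivial {n : ℕ} (H : Subgroup (FreeGroup (Fin n)))
    [H.FiniteIndex] (ζ : ℂˣ) (h : ∀ x ∈ H, lengthChar ζ x = 1) :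
    orderOf ζ ∣ schreierPeriod H := by
  refine dvd_setGcd ?_
  rintro m ⟨-, hm⟩
  obtain ⟨L, rfl, hL⟩ := (period_set_mem_iff H m).mp hm
  exact orderOf_dvd_of_pow_eq_one (by rw [← lengthChar_posWord, h _ hL])

/-! ### Character sums over coset partitions -/

/-- The sum of a character over a set vanishes if the set is invariant under left translation by
some element on which the character is nontrivial. -/
lemma sum_char_eq_zero {Q : Type*} [Group Q] [Fintype Q] (χ : Q →* ℂˣ) (T : Set Q) (a : Q)
    (ha : χ a ≠ 1) (hT : ∀ q, a * q ∈ T ↔ q ∈ T) :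
    ∑ q, (if q ∈ T then (χ q : ℂ) else 0) = 0 := by
  have h : ∑ q, (if q ∈ T then (χ q : ℂ) else 0) =
      (χ a : ℂ) * ∑ q, (if q ∈ T then (χ q : ℂ) else 0) := by
    rw [Finset.mul_sum, ← Equiv.sum_comp (Equiv.mulLeft a)]
    refine Finset.sum_congr rfl fun q _ => ?_
    simp [hT]
  have ha' : (χ a : ℂ) ≠ 1 := fun h => ha (Units.ext h)
  by_contra hne
  exact ha' (mul_right_cancel₀ hne (by rw [← h, one_mul]))

lemma exists_trivial_on_other_finite {Q : Type*} [Group Q] [Fintype Q] {ι : Type*} [Fintype ι]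
    (H : ι → Subgroup Q) (α : ι → Q) (hpart : IsCosetPartition H α) (χ : Q →* ℂˣ)
    (hχ : ∃ a, χ a ≠ 1) (ℓ : ι) (hℓ : ∀ x ∈ H ℓ, χ x = 1) :
    ∃ j, j ≠ ℓ ∧ ∀ x ∈ H j, χ x = 1 := by
  by_contra! hcon
  obtain ⟨a, ha⟩ := hχ
  let S : ι → ℂ := fun i => ∑ q, if q ∈ rightCosetSet (H i) (α i) then (χ q : ℂ) else 0
  have htotal : ∑ i, S i = 0 := by
    rw [← sum_char_eq_zero χ Set.univ a ha (by simp), Finset.sum_comm]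
    refine Finset.sum_congr rfl fun q _ => ?_
    obtain ⟨i, hi⟩ := hpart.1 q
    rw [Finset.sum_eq_single i]
    · simp [hi]
    · intro j _ hj
      exact if_neg fun hq => Set.disjoint_left.mp (hpart.2 hj) hq hi
    · simp
  have hother : ∀ j, j ≠ ℓ → S j = 0 := by
    intro j hj
    obtain ⟨b, hb, hb1⟩ := hcon j hj
    refine sum_char_eq_zero χ _ b hb1 fun q => ?_
    simp only [rightCosetSet, Set.mem_ofPred_eq, mul_assoc]
    exact (H j).mul_mem_cancel_left hb
  rw [Finset.sum_eq_single ℓ (fun j _ hj => hother j hj) (by simp)] at htotal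
  have hconst : S ℓ = ∑ q, if q ∈ rightCosetSet (H ℓ) (α ℓ) then (χ (α ℓ) : ℂ) else 0 := by
    refine Finset.sum_congr rfl fun q _ => ?_
    split_ifs with hq
    · have := hℓ _ hq
      rw [map_mul, map_inv, mul_inv_eq_one] at this
      rw [this]
    · rfl
  rw [hconst, ← Finset.sum_filter, Finset.sum_const, smul_eq_zero] at htotal
  rcases htotal with h | h
  · have hmem : α ℓ ∈ Finset.univ.filter (· ∈ rightCosetSet (H ℓ) (α ℓ)) := by
      refine Finset.mem_filter.mpr ⟨Finset.mem_univ _, ?_⟩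
      change α ℓ * (α ℓ)⁻¹ ∈ H ℓ
      rw [mul_inv_cancel]
      exact (H ℓ).one_mem
    rw [Finset.card_eq_zero.mp h] at hmem
    simp at hmem
  · exact Units.ne_zero _ h

/-- If a nontrivial character is trivial on one member of a partition into cosets of finite-index
subgroups, then it is trivial on another one; the finite case applies to the quotient by the
normal core of the intersection. -/
lemma exists_trivial_on_other {G : Type*} [Group G] {ι : Type*} [Fintype ι]
    (H : ι → Subgroup G) [∀ i, (H i).FiniteIndex] (α : ι → G) (hpart : IsCosetPartition H α)
    (χ : G →* ℂˣ) (hχ : ∃ a, χ a ≠ 1) (ℓ : ι) (hℓ : ∀ x ∈ H ℓ, χ x = 1) :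
    ∃ j, j ≠ ℓ ∧ ∀ x ∈ H j, χ x = 1 := by
  have : (⨅ i, H i).FiniteIndex := Subgroup.finiteIndex_iInf inferInstance
  let K := (⨅ i, H i).normalCore
  have hKH : ∀ i, K ≤ H i := fun i => (Subgroup.normalCore_le _).trans (iInf_le _ i)
  have : Finite (G ⧸ K) := K.finite_quotient_of_finiteIndex
  have : Fintype (G ⧸ K) := Fintype.ofFinite _
  let π := QuotientGroup.mk' K
  have hmem : ∀ i x, π x ∈ (H i).map π ↔ x ∈ H i := by
    intro i x
    rw [← Subgroup.mem_comap, Subgroup.comap_map_eq_self]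
    rw [QuotientGroup.ker_mk']
    exact hKH i
  have hcoset : ∀ i x, π x ∈ rightCosetSet ((H i).map π) (π (α i)) ↔
      x ∈ rightCosetSet (H i) (α i) := by
    intro i x
    simp only [rightCosetSet, Set.mem_ofPred_eq, ← map_inv, ← map_mul, hmem]
  have hπ : Function.Surjective π := QuotientGroup.mk'_surjective K
  have hpartQ : IsCosetPartition (fun i => (H i).map π) (fun i => π (α i)) := by
    refine ⟨fun q => ?_, fun i j hij => Set.disjoint_left.mpr fun q hi hj => ?_⟩
    · obtain ⟨x, rfl⟩ := hπ q
      obtain ⟨i, hi⟩ := hpart.1 x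
      exact ⟨i, (hcoset i x).mpr hi⟩
    · obtain ⟨x, rfl⟩ := hπ q
      exact Set.disjoint_left.mp (hpart.2 hij) ((hcoset i x).mp hi) ((hcoset j x).mp hj)
  let χQ : G ⧸ K →* ℂˣ := QuotientGroup.lift K χ fun x hx => hℓ x (hKH ℓ hx)
  have hχQ : ∀ x, χQ (π x) = χ x := fun x => rfl
  obtain ⟨a, ha⟩ := hχ
  obtain ⟨j, hj, hjtriv⟩ := exists_trivial_on_other_finite _ _ hpartQ χQ ⟨π a, ha⟩ ℓ (by
    rintro _ ⟨x, hx, rfl⟩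
    exact hℓ x hx)
  exact ⟨j, hj, fun x hx => hjtriv (π x) ⟨x, hx, rfl⟩⟩

/-- **Theorem.** If `{H_i α_i}` is a coset partition of `F_n` with indices `1 < d_1 ≤ … ≤ d_s`,
and the period `h_ℓ > 1` of the transition matrix of `H_ℓ` does not properly divide any other
period, then there is `j ≠ ℓ` with `h_j = h_ℓ`. -/
theorem nondividing_period_repeats (n s : ℕ) (hn : 1 ≤ n)
    (H : Fin s → Subgroup (FreeGroup (Fin n))) (α : Fin s → FreeGroup (Fin n))
    [inst : ∀ i, (H i).FiniteIndex]
    (d : Fin s → ℕ) (hindex : ∀ i, (H i).index = d i)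
    (hd1 : ∀ i, 1 < d i) (hmono : Monotone d)
    (hpart : IsCosetPartition H α)
    (ℓ : Fin s)
    (hℓ1 : 1 < schreierPeriod (H ℓ))
    (hnd : ∀ i, schreierPeriod (H ℓ) ∣ schreierPeriod (H i) →
      schreierPeriod (H i) = schreierPeriod (H ℓ)) :
    ∃ j, j ≠ ℓ ∧ schreierPeriod (H j) = schreierPeriod (H ℓ) := by
  have hne : schreierPeriod (H ℓ) ≠ 0 := by omega
  have hprim := Complex.isPrimitiveRoot_exp _ hne
  obtain ⟨ζ, hζ⟩ := hprim.isUnit hne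
  rw [← hζ, IsPrimitiveRoot.coe_units_iff] at hprim
  have hgen : lengthChar ζ (FreeGroup.of (⟨0, hn⟩ : Fin n)) ≠ 1 := by
    simpa [lengthChar] using hprim.ne_one hℓ1
  obtain ⟨j, hj, hjtriv⟩ := exists_trivial_on_other H α hpart (lengthChar ζ) ⟨_, hgen⟩ ℓ
    fun x hx => lengthChar_eq_one_of_mem (H ℓ) ζ hprim.pow_eq_one hx
  refine ⟨j, hj, hnd j ?_⟩
  have := dvd_period_of_lengthChar_trivial (H j) ζ hjtriv
  rwa [← hprim.eq_orderOf] at this
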